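/- Let k be a field and α : G → Aut(L/k) a finite embedding problem over k. Then there exist n ≥ 1, a tuple T = (T₁,…,Tₙ) of algebraically independent indeterminates over k, a finite separable extension E of k(T₁,…,Tₙ) containing L(T₁,…,Tₙ), and an isomorphism β : Aut(E/k(T₁,…,Tₙ)) → G such that every σ ∈ Aut(E/k(T₁,…,Tₙ)) maps L onto itself with σ|_L = α(β(σ)), and moreover every element of E that is algebraic over k lies in L (i.e., E ∩ k̄ = L). -/

import Mathlib

set_option synthInstance.maxHeartbeats 1000000
set_option maxHeartbeats 1000000

/-!
Let `G` act on `F = L(x_g : g ∈ G)` by translating the indeterminates and through `α` on the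
coefficients. The action is faithful, and over the purely transcendental field `K` generated over
`k` by the elementary symmetric functions of the `x_g`, which it fixes, `F` is finite separable.
So `G` becomes a group of automorphisms of `F/K`, and it remains to shrink `Gal(F/K)` to `G` at
the cost of one more indeterminate.

Choose `z ∈ F` with stabilizer `G` in `Gal(F/K)` and set `s = X ^ d + X ^ m + z X`, where `m` and
`d` are coprime, `1 < m < d - 1` and `d ≠ 0` in `F`. An automorphism of `F(X)` over `K(s)`
preserves `F`, so it acts on the coefficients by some `τ ∈ Gal(F/K)` and sends `X` to a polynomial
`p` with `p ^ d + p ^ m + τ(z) p = s`. Comparing degrees and the coefficients at `X ^ (d - 1)`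
gives `p = a X`; those at `X ^ d` and `X ^ m` give `a ^ d = a ^ m = 1`, hence `a = 1`; the linear
ones give `τ z = z`. Therefore `Gal(F(X)/K(s)) = G`, while `L` is algebraically closed in `F(X)`
and `K(s)` is purely transcendental over `k`.
-/

open Polynomial IntermediateField

section Polynomial

theorem nextCoeff_taylor {R : Type*} [CommSemiring R] (r : R) (f : R[X]) :
    (taylor r f).nextCoeff = f.nextCoeff + f.natDegree * f.leadingCoeff * r := by
  rcases Nat.eq_zero_or_pos f.natDegree with h0 | hpos
  · simp [nextCoeff, h0]
  · obtain ⟨n, hn⟩ := Nat.exists_eq_add_one.2 hpos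
    have hlinear : (hasseDeriv n f).natDegree ≤ 1 := by
      simpa [hn] using natDegree_hasseDeriv_le f n
    rw [nextCoeff_of_natDegree_pos (by rwa [natDegree_taylor]), nextCoeff_of_natDegree_pos hpos,
      natDegree_taylor, taylor_coeff, leadingCoeff, hn, Nat.add_sub_cancel,
      eq_X_add_C_of_natDegree_le_one hlinear]
    simp [hasseDeriv_coeff, add_comm 1 n, add_comm]

theorem nextCoeff_trinomial_eq_zero {R : Type*} [Semiring R] {k m n : ℕ} (hkm : k < m)
    (hmn : m + 1 < n) (u v : R) {w : R} (hw : w ≠ 0) :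
    (trinomial k m n u v w).nextCoeff = 0 := by
  have hk : n - 1 ≠ k := by omega
  have hm : n - 1 ≠ m := by omega
  have hn : n - 1 ≠ n := by omega
  have hdeg : (trinomial k m n u v w).natDegree = n := trinomial_natDegree hkm (by omega) hw
  rw [nextCoeff_of_natDegree_pos (by omega), hdeg]
  simp [trinomial_def, coeff_X_pow, hk, hm, hn]

variable {R : Type*} [CommRing R] [IsDomain R]

theorem derivative_ne_zero_of_natDegree_ne_zero {f : R[X]} (hf : (f.natDegree : R) ≠ 0) :
    derivative f ≠ 0 := by
  intro hder
  obtain ⟨n, hn⟩ := Nat.exists_eq_add_one_of_ne_zero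
    (fun h0 : f.natDegree = 0 ↦ hf (by rw [h0, Nat.cast_zero]))
  have hcoeff : (derivative f).coeff n = f.leadingCoeff * f.natDegree := by
    rw [coeff_derivative, leadingCoeff, hn, Nat.cast_add_one]
  rw [hder, coeff_zero, eq_comm, mul_eq_zero, leadingCoeff_eq_zero] at hcoeff
  rcases hcoeff with rfl | h0
  · simp at hf
  · exact hf h0

theorem exists_eq_C_mul_X_of_comp_eq {f g p : R[X]} (hn : (f.natDegree : R) ≠ 0)
    (hdeg : g.natDegree = f.natDegree) (hf : f.nextCoeff = 0) (hg : g.nextCoeff = 0)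
    (h : f.comp p = g) : ∃ a, p = C a * X := by
  have hpos : 0 < f.natDegree := Nat.pos_of_ne_zero fun h0 ↦ hn (by rw [h0, Nat.cast_zero])
  have hp : p.natDegree = 1 := by
    rw [← h, natDegree_comp] at hdeg
    exact Nat.eq_of_mul_eq_mul_left hpos (hdeg.trans (mul_one _).symm)
  obtain ⟨a, ha, b, rfl⟩ := natDegree_eq_one.1 hp
  have hcomp : (taylor b f).comp (C a * X) = g := by
    rw [← h, taylor_apply, comp_assoc, add_comp, X_comp, C_comp]
  have hcoeff : (taylor b f).nextCoeff * a ^ (f.natDegree - 1) = g.nextCoeff := by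
    rw [nextCoeff_of_natDegree_pos (by rwa [natDegree_taylor]),
      nextCoeff_of_natDegree_pos (by rwa [hdeg]), hdeg, natDegree_taylor, ← hcomp,
      comp_C_mul_X_coeff]
  have hlead : f.leadingCoeff ≠ 0 := fun h0 ↦ by simp [leadingCoeff_eq_zero.1 h0] at hpos
  have hb : b = 0 := by simpa [nextCoeff_taylor, hf, hg, hn, hlead, ha] using hcoeff
  exact ⟨a, by rw [hb, C_0, add_zero]⟩

theorem eq_X_of_trinomial_comp_eq {d m : ℕ} (hd : (d : R) ≠ 0) (hdm : d.Coprime m) (hm : 1 < m)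
    (hmd : m + 1 < d) {p : R[X]} {z z' : R}
    (h : (trinomial 1 m d z' 1 1).comp p = trinomial 1 m d z 1 1) : p = X ∧ z' = z := by
  have hmd' : m < d := by omega
  have hdeg (w : R) : (trinomial 1 m d w 1 1).natDegree = d :=
    trinomial_natDegree hm hmd' one_ne_zero
  have hnext (w : R) : (trinomial 1 m d w 1 1).nextCoeff = 0 :=
    nextCoeff_trinomial_eq_zero hm hmd w 1 one_ne_zero
  obtain ⟨a, rfl⟩ := exists_eq_C_mul_X_of_comp_eq (by rwa [hdeg]) (by rw [hdeg, hdeg])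
    (hnext z') (hnext z) h
  have hcoeff (i : ℕ) :
      (trinomial 1 m d z' 1 1).coeff i * a ^ i = (trinomial 1 m d z 1 1).coeff i := by
    rw [← h, comp_C_mul_X_coeff]
  have had : a ^ d = 1 := by simpa [trinomial_leading_coeff' hm hmd'] using hcoeff d
  have ham : a ^ m = 1 := by simpa [trinomial_middle_coeff hm hmd'] using hcoeff m
  obtain rfl : a = 1 := by simpa [hdm.gcd_eq_one] using pow_gcd_eq_one.2 ⟨had, ham⟩
  exact ⟨by rw [C_1, one_mul], by simpa [trinomial_trailing_coeff' hm hmd'] using hcoeff 1⟩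

theorem exists_coprime_natCast_ne_zero (E : Type*) [Field E] :
    ∃ d m : ℕ, (d : E) ≠ 0 ∧ d.Coprime m ∧ 1 < m ∧ m + 1 < d := by
  by_cases h5 : (5 : E) = 0
  · have h7 : (7 : E) ≠ 0 := fun h7 ↦
      one_ne_zero (α := E) (by linear_combination 3 * h5 - 2 * h7)
    exact ⟨7, 3, mod_cast h7, by norm_num, by norm_num, by norm_num⟩
  · exact ⟨5, 3, mod_cast h5, by norm_num, by norm_num, by norm_num⟩

end Polynomial

section Separable

theorem isSeparable_of_aeval_derivative_ne_zero {K F : Type*} [Field K] [CommRing F] [IsDomain F]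
    [Algebra K F] {x : F} {q : K[X]} (h0 : aeval x q = 0) (h1 : aeval x (derivative q) ≠ 0) :
    IsSeparable K x := by
  have hq : q ≠ 0 := by
    rintro rfl
    simp at h1
  have hirr := minpoly.irreducible (IsAlgebraic.isIntegral ⟨q, hq, h0⟩)
  rw [IsSeparable, separable_iff_derivative_ne_zero hirr]
  intro hd
  obtain ⟨r, hr⟩ := minpoly.dvd K x h0
  exact h1 (by simp [hr, derivative_mul, hd])

section Tower

variable (k K L : Type*) {F : Type*} [Field k] [Field K] [Field L] [Field F] [Algebra k K]
  [Algebra k L] [Algebra k F] [Algebra K F] [Algebra L F] [IsScalarTower k K F]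
  [IsScalarTower k L F]

theorem algebraMap_mem_separableClosure [Algebra.IsSeparable k L] (x : L) :
    algebraMap L F x ∈ separableClosure K F := by
  rw [mem_separableClosure_iff]
  exact ((Algebra.IsSeparable.isSeparable k x).map (IsScalarTower.toAlgHom k L F)
    (algebraMap L F).injective).tower_top K

theorem isSeparable_of_adjoin_eq_top [Algebra.IsSeparable k L] {T : Set F}
    (hT : adjoin L T = ⊤) (hsep : ∀ t ∈ T, IsSeparable K t) : Algebra.IsSeparable K F := by
  rw [← separableClosure.eq_top_iff, eq_top_iff]
  intro y _
  have hy : y ∈ adjoin L T := hT ▸ mem_top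
  induction hy using adjoin_induction with
  | mem t ht => exact mem_separableClosure_iff.2 (hsep t ht)
  | algebraMap x => exact algebraMap_mem_separableClosure k K L x
  | add x y _ _ hx hy => exact add_mem (hx mem_top) (hy mem_top)
  | inv x _ hx => exact inv_mem (hx mem_top)
  | mul x y _ _ hx hy => exact mul_mem (hx mem_top) (hy mem_top)

theorem finiteDimensional_of_isFractionRing (A : Type*) [CommRing A] [Algebra L A] [Algebra A F]
    [IsScalarTower L A F] [IsFractionRing A F] [Algebra.FiniteType L A] [FiniteDimensional k L]
    [Algebra.IsAlgebraic K F] : FiniteDimensional K F := by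
  have : Algebra.EssFiniteType A F := .of_isLocalization F (nonZeroDivisors A)
  have : Algebra.EssFiniteType L F := .comp L A F
  have : Algebra.EssFiniteType k F := .comp k L F
  have : Algebra.EssFiniteType K F := .of_comp k K F
  exact Algebra.finite_of_essFiniteType_of_isAlgebraic

end Tower

theorem isSeparable_ratFunc_of_derivative_ne_zero (K : Type*) {E : Type*} [Field K] [Field E]
    [Algebra K E] [Algebra.IsSeparable K E] {f : E[X]} (hf : derivative f ≠ 0) :
    Algebra.IsSeparable K⟮algebraMap E[X] (RatFunc E) f⟯ (RatFunc E) := by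
  set s := algebraMap E[X] (RatFunc E) f
  let S := separableClosure K⟮s⟯ (RatFunc E)
  let i : E →+* S := (algebraMap E (RatFunc E)).codRestrict S
    (algebraMap_mem_separableClosure K K⟮s⟯ E)
  have hi (p : E[X]) : aeval (RatFunc.X : RatFunc E) (p.map i) = algebraMap E[X] (RatFunc E) p := by
    rw [aeval_def, eval₂_map, ← RatFunc.aeval_X_left_eq_algebraMap]
    rfl
  let s' : S := algebraMap K⟮s⟯ S (AdjoinSimple.gen K s)
  have hX : IsSeparable S (RatFunc.X : RatFunc E) := by
    refine isSeparable_of_aeval_derivative_ne_zero (q := f.map i - C s') ?_ ?_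
    · rw [map_sub, hi, aeval_C]
      exact sub_self s
    · rw [derivative_sub, derivative_C, sub_zero, Polynomial.derivative_map, hi]
      simpa using hf
  refine isSeparable_of_adjoin_eq_top K K⟮s⟯ E RatFunc.adjoin_X ?_
  rintro _ rfl
  exact .of_algebra_isSeparable_of_isSeparable K⟮s⟯ hX

end Separable

section IntegrallyClosedIn

theorem isIntegrallyClosedIn_trans (R A B : Type*) [CommRing R] [CommRing A] [CommRing B]
    [Algebra R A] [Algebra A B] [Algebra R B] [IsScalarTower R A B] [IsIntegrallyClosedIn R A]
    [IsIntegrallyClosedIn A B] : IsIntegrallyClosedIn R B := by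
  have hRA := (isIntegrallyClosedIn_iff (R := R) (A := A)).1 inferInstance
  have hAB := (isIntegrallyClosedIn_iff (R := A) (A := B)).1 inferInstance
  refine isIntegrallyClosedIn_iff.2 ⟨?_, fun {x} hx ↦ ?_⟩
  · rw [IsScalarTower.algebraMap_eq R A B]
    exact hAB.1.comp hRA.1
  · obtain ⟨y, rfl⟩ := hAB.2 hx.tower_top
    obtain ⟨z, rfl⟩ := hRA.2 ((isIntegral_algebraMap_iff hAB.1).1 hx)
    exact ⟨z, IsScalarTower.algebraMap_apply R A B z⟩

theorem isIntegrallyClosedIn_of_isUnit {L A : Type*} (F : Type*) [Field L] [CommRing A] [Field F]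
    [Algebra L A] [Algebra A F] [Algebra L F] [IsScalarTower L A F] [IsFractionRing A F]
    [IsIntegrallyClosed A] (hA : ∀ u : A, IsUnit u → ∃ c, algebraMap L A c = u) :
    IsIntegrallyClosedIn L F := by
  refine isIntegrallyClosedIn_iff.2 ⟨(algebraMap L F).injective, fun {x} hx ↦ ?_⟩
  rcases eq_or_ne x 0 with rfl | hx0
  · exact ⟨0, map_zero _⟩
  obtain ⟨a, ha⟩ := (IsIntegrallyClosed.isIntegral_iff (R := A)).1 hx.tower_top
  obtain ⟨b, hb⟩ := (IsIntegrallyClosed.isIntegral_iff (R := A)).1 (hx.inv).tower_top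
  have hab : a * b = 1 := by
    apply IsFractionRing.injective A F
    rw [map_mul, ha, hb, mul_inv_cancel₀ hx0, map_one]
  obtain ⟨c, hc⟩ := hA a (.of_mul_eq_one b hab)
  exact ⟨c, by rw [IsScalarTower.algebraMap_apply L A F, hc, ha]⟩

instance isIntegrallyClosedIn_ratFunc (E : Type*) [Field E] : IsIntegrallyClosedIn E (RatFunc E) :=
  isIntegrallyClosedIn_of_isUnit (A := E[X]) _ fun _ hu ↦
    (Polynomial.isUnit_iff.1 hu).imp fun _ hc ↦ hc.2

instance isIntegrallyClosedIn_fractionRing_mvPolynomial (σ L : Type*) [Field L] :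
    IsIntegrallyClosedIn L (FractionRing (MvPolynomial σ L)) :=
  isIntegrallyClosedIn_of_isUnit (A := MvPolynomial σ L) _ fun _ hu ↦
    (MvPolynomial.isUnit_iff_eq_C_of_isReduced.1 hu).imp fun _ hc ↦ hc.2.symm

theorem exists_algEquiv_algebraMap_eq {K E F : Type*} [Field K] [Field E] [Field F] [Algebra K E]
    [Algebra E F] [Algebra K F] [IsScalarTower K E F] [Algebra.IsAlgebraic K E]
    [IsIntegrallyClosedIn E F] (σ : Gal(F/K)) :
    ∃ τ : Gal(E/K), ∀ x, σ (algebraMap E F x) = algebraMap E F (τ x) := by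
  let i : E →ₐ[K] F := IsScalarTower.toAlgHom K E F
  have hrange (x : E) : σ (i x) ∈ i.range := by
    have hint : IsIntegral K (σ (i x)) :=
      ((Algebra.IsIntegral.isIntegral x).map i).map σ
    exact IsIntegrallyClosedIn.algebraMap_eq_of_integral hint.tower_top
  let f : E →ₐ[K] E := (AlgEquiv.ofInjectiveField i).symm.toAlgHom.comp
    ((σ.toAlgHom.comp i).codRestrict i.range hrange)
  refine ⟨AlgEquiv.ofBijective f (Algebra.IsAlgebraic.algHom_bijective f), fun x ↦ ?_⟩
  exact congrArg Subtype.val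
    ((AlgEquiv.ofInjectiveField i).apply_symm_apply ⟨σ (i x), hrange x⟩).symm

end IntegrallyClosedIn

section Galois

variable {K F : Type*} [Field K] [Field F] [Algebra K F]

theorem fixingSubgroup_adjoin_simple (x : F) :
    K⟮x⟯.fixingSubgroup = MulAction.stabilizer Gal(F/K) x := by
  ext σ
  simpa using forall_mem_adjoin_smul_eq_self_iff K (S := {x}) σ

theorem exists_stabilizer_eq [FiniteDimensional K F] [Algebra.IsSeparable K F]
    (H : Subgroup Gal(F/K)) : ∃ z : F, MulAction.stabilizer Gal(F/K) z = H := by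
  obtain ⟨z, hz⟩ := Field.exists_primitive_element K (fixedField H)
  refine ⟨z, ?_⟩
  rw [← fixingSubgroup_adjoin_simple, ← lift_adjoin_simple, hz, lift_top, fixingSubgroup_fixedField]

theorem exists_mulEquiv_of_range_eq_fixingSubgroup {G : Type*} [Group G] {ψ : G →* Gal(F/K)}
    (hψ : Function.Injective ψ) {M : IntermediateField K F} (hM : ψ.range = M.fixingSubgroup) :
    ∃ β : Gal(F/M) ≃* G, ∀ σ x, σ x = ψ (β σ) x := by
  let e : G ≃* Gal(F/M) := (MonoidHom.ofInjective hψ).trans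
    ((MulEquiv.subgroupCongr hM).trans (fixingSubgroupEquiv M))
  exact ⟨e.symm, fun σ x ↦ DFunLike.congr_fun (e.apply_symm_apply σ).symm x⟩

end Galois

section RatFunc

variable {K E : Type*} [Field K] [Field E] [Algebra K E]

variable (K E) in
/-- The action of `Gal(E/K)` on the coefficients of rational functions over `E`. -/
noncomputable def ratFuncAut : Gal(E/K) →* Gal(RatFunc E/K) :=
  (IsFractionRing.fieldEquivOfAlgEquivHom K (RatFunc E)).comp
    { toFun := fun τ : Gal(E/K) ↦ (Polynomial.mapAlgEquiv τ : E[X] ≃ₐ[K] E[X])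
      map_one' := by ext; simp
      map_mul' := fun σ τ ↦ by ext; simp }

theorem ratFuncAut_algebraMap (τ : Gal(E/K)) (p : E[X]) :
    ratFuncAut K E τ (algebraMap E[X] (RatFunc E) p) =
      algebraMap E[X] (RatFunc E) (p.map (τ : E →+* E)) := by
  simp [ratFuncAut]

theorem ratFuncAut_algebraMap_base (τ : Gal(E/K)) (x : E) :
    ratFuncAut K E τ (algebraMap E (RatFunc E) x) = algebraMap E (RatFunc E) (τ x) := by
  simpa using ratFuncAut_algebraMap τ (C x)

theorem ratFuncAut_injective : Function.Injective (ratFuncAut K E) := by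
  intro σ τ h
  ext x
  apply (algebraMap E (RatFunc E)).injective
  rw [← ratFuncAut_algebraMap_base, h, ratFuncAut_algebraMap_base]

theorem exists_algHom_X_eq_of_monic (ρ : RatFunc E →ₐ[E] RatFunc E) {f g : E[X]} (hf : f.Monic)
    (hdeg : f.natDegree ≠ 0)
    (hfg : ρ (algebraMap E[X] (RatFunc E) f) = algebraMap E[X] (RatFunc E) g) :
    ∃ p : E[X], ρ RatFunc.X = algebraMap E[X] (RatFunc E) p ∧ f.comp p = g := by
  have haeval : aeval (ρ RatFunc.X) f = algebraMap E[X] (RatFunc E) g := by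
    rw [aeval_algHom_apply, RatFunc.aeval_X_left_eq_algebraMap, hfg]
  have hint : IsIntegral E[X] (ρ RatFunc.X) := by
    refine IsIntegral.of_aeval_monic (p := f.map (algebraMap E E[X])) (hf.map _) ?_ ?_
    · rwa [natDegree_map]
    · rw [aeval_map_algebraMap E[X], haeval]
      exact isIntegral_algebraMap
  obtain ⟨p, hp⟩ := IsIntegrallyClosed.isIntegral_iff.1 hint
  refine ⟨p, hp.symm, RatFunc.algebraMap_injective E ?_⟩
  rw [← haeval, ← hp, aeval_algebraMap_apply, aeval_def, comp, algebraMap_eq]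

theorem ratFunc_algHom_ext {F : Type*} [Field F] [Algebra E F] {ρ ρ' : RatFunc E →ₐ[E] F}
    (h : ρ RatFunc.X = ρ' RatFunc.X) : ρ = ρ' := by
  refine IsLocalization.algHom_ext (nonZeroDivisors E[X]) ?_
  ext
  simpa [Algebra.algHom] using h

theorem eq_id_of_map_trinomial {d m : ℕ} (hd : (d : E) ≠ 0) (hdm : d.Coprime m) (hm : 1 < m)
    (hmd : m + 1 < d) {ρ : RatFunc E →ₐ[E] RatFunc E} {z z' : E}
    (h : ρ (algebraMap E[X] (RatFunc E) (trinomial 1 m d z' 1 1)) =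
      algebraMap E[X] (RatFunc E) (trinomial 1 m d z 1 1)) :
    ρ = AlgHom.id E (RatFunc E) ∧ z' = z := by
  have hmd' : m < d := by omega
  have hdeg : (trinomial 1 m d z' 1 1).natDegree ≠ 0 := by
    rw [trinomial_natDegree hm hmd' one_ne_zero]
    omega
  obtain ⟨p, hp, hcomp⟩ := exists_algHom_X_eq_of_monic ρ (trinomial_monic hm hmd') hdeg h
  obtain ⟨rfl, hz⟩ := eq_X_of_trinomial_comp_eq hd hdm hm hmd hcomp
  exact ⟨ratFunc_algHom_ext (hp.trans RatFunc.algebraMap_X), hz⟩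

theorem stabilizer_algebraMap_trinomial [Algebra.IsAlgebraic K E] {d m : ℕ} (hd : (d : E) ≠ 0)
    (hdm : d.Coprime m) (hm : 1 < m) (hmd : m + 1 < d) (z : E) :
    MulAction.stabilizer Gal(RatFunc E/K)
        (algebraMap E[X] (RatFunc E) (trinomial 1 m d z 1 1)) =
      (MulAction.stabilizer Gal(E/K) z).map (ratFuncAut K E) := by
  have hact (τ : Gal(E/K)) (w : E) :
      ratFuncAut K E τ (algebraMap E[X] (RatFunc E) (trinomial 1 m d w 1 1)) =
        algebraMap E[X] (RatFunc E) (trinomial 1 m d (τ w) 1 1) := by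
    rw [ratFuncAut_algebraMap]
    simp [trinomial_def]
  ext σ
  refine ⟨fun hσ ↦ ?_, ?_⟩
  · obtain ⟨τ, hτ⟩ := exists_algEquiv_algebraMap_eq (E := E) σ
    have hρ (x : E) : ratFuncAut K E τ⁻¹ (σ (algebraMap E (RatFunc E) x)) =
        algebraMap E (RatFunc E) x := by
      rw [hτ, ratFuncAut_algebraMap_base]
      exact congrArg _ (τ.symm_apply_apply x)
    let ρ : RatFunc E →ₐ[E] RatFunc E :=
      { ((ratFuncAut K E τ⁻¹ * σ : Gal(RatFunc E/K)) : RatFunc E →+* RatFunc E) with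
        commutes' := hρ }
    obtain ⟨hρ_id, hz⟩ := eq_id_of_map_trinomial (ρ := ρ) hd hdm hm hmd
      ((congrArg (ratFuncAut K E τ⁻¹) hσ).trans (hact τ⁻¹ z))
    refine ⟨τ, (τ.symm_apply_eq.1 hz.symm).symm, ?_⟩
    have hσ_eq : ratFuncAut K E τ⁻¹ * σ = 1 := AlgEquiv.ext fun y ↦ DFunLike.congr_fun hρ_id y
    rwa [map_inv, inv_mul_eq_one] at hσ_eq
  · rintro ⟨τ, hτ, rfl⟩
    exact (hact τ z).trans (by rw [show τ z = z from hτ])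

end RatFunc

section RegularSolution

/-- The extension `F/K` is a regular solution of the embedding problem `α : G →* Gal(L/k)`: it is
finite separable, `L` is algebraically closed in `F`, and `Gal(F/K)` is identified with `G` in such
a way that restriction to `L` becomes `α`. The field `L` enters through its algebra structure on
`F`; an embedding of `k` into `K` is not part of the definition. -/
structure IsRegularSolution {k L G : Type*} [Field k] [Field L] [Algebra k L] [Group G]
    (α : G →* Gal(L/k)) (K F : Type*) [Field K] [Field F] [Algebra K F] [Algebra L F] : Prop where
  finiteDimensional : FiniteDimensional K F
  isSeparable : Algebra.IsSeparable K F
  isIntegrallyClosedIn : IsIntegrallyClosedIn L F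
  exists_mulEquiv : ∃ β : Gal(F/K) ≃* G,
    ∀ σ x, σ (algebraMap L F x) = algebraMap L F (α (β σ) x)

variable {k L G : Type*} [Field k] [Field L] [Algebra k L] [Group G] {α : G →* Gal(L/k)}
  {K F : Type*} [Field K] [Field F] [Algebra K F] [Algebra L F]

theorem exists_isRegularSolution_ratFunc [FiniteDimensional K F] [Algebra.IsSeparable K F]
    {φ : G →* Gal(F/K)} (hφ : Function.Injective φ) :
    ∃ s : RatFunc F, Transcendental F s ∧ IsRegularSolution φ K⟮s⟯ (RatFunc F) := by
  obtain ⟨d, m, hd, hdm, hm, hmd⟩ := exists_coprime_natCast_ne_zero F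
  obtain ⟨z, hz⟩ := exists_stabilizer_eq φ.range
  set f : F[X] := trinomial 1 m d z 1 1
  have hdeg : f.natDegree = d := trinomial_natDegree hm (by omega) one_ne_zero
  set s : RatFunc F := algebraMap F[X] (RatFunc F) f
  have hs : Transcendental F s := by
    refine RatFunc.transcendental_of_ne_C s ?_
    rintro ⟨c, hc⟩
    have hfc : f = C c := RatFunc.algebraMap_injective F (hc.trans (RatFunc.algebraMap_C c).symm)
    rw [hfc, natDegree_C] at hdeg
    omega
  have hsep : Algebra.IsSeparable K⟮s⟯ (RatFunc F) :=
    isSeparable_ratFunc_of_derivative_ne_zero K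
      (derivative_ne_zero_of_natDegree_ne_zero (by rwa [hdeg]))
  have hrange : ((ratFuncAut K F).comp φ).range = K⟮s⟯.fixingSubgroup := by
    rw [MonoidHom.range_comp, ← hz, ← stabilizer_algebraMap_trinomial hd hdm hm hmd,
      fixingSubgroup_adjoin_simple]
  obtain ⟨β, hβ⟩ := exists_mulEquiv_of_range_eq_fixingSubgroup (ψ := (ratFuncAut K F).comp φ)
    (ratFuncAut_injective.comp hφ) hrange
  exact ⟨s, hs, finiteDimensional_of_isFractionRing K K⟮s⟯ F F[X], hsep, inferInstance, β,
    fun σ x ↦ (hβ σ _).trans (ratFuncAut_algebraMap_base (φ (β σ)) x)⟩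

namespace IsRegularSolution

theorem of_tower {M N : Type*} [Field M] [Field N] [Algebra M N] [Algebra F N] [Algebra L N]
    [IsScalarTower L F N] [IsIntegrallyClosedIn L F] {φ : G →* Gal(F/K)}
    (h : IsRegularSolution φ M N)
    (hφ : ∀ g x, φ g (algebraMap L F x) = algebraMap L F (α g x)) : IsRegularSolution α M N := by
  have := h.isIntegrallyClosedIn
  obtain ⟨β, hβ⟩ := h.exists_mulEquiv
  refine ⟨h.finiteDimensional, h.isSeparable, isIntegrallyClosedIn_trans L F N, β, fun σ x ↦ ?_⟩
  rw [IsScalarTower.algebraMap_apply L F N, hβ, hφ, IsScalarTower.algebraMap_apply L F N]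

theorem congr_base (h : IsRegularSolution α K F) {R : Type*} [Field R] [Algebra R F] (e : R ≃+* K)
    (he : ∀ r, algebraMap R F r = algebraMap K F (e r)) : IsRegularSolution α R F := by
  have := h.finiteDimensional
  have := h.isSeparable
  have hcomp :
      (algebraMap R F).comp e.symm = (RingEquiv.refl F : F →+* F).comp (algebraMap K F) := by
    ext c
    simp [he]
  obtain ⟨β, hβ⟩ := h.exists_mulEquiv
  let ρ : Gal(F/R) ≃* Gal(F/K) :=
    { toFun := fun σ ↦ AlgEquiv.ofRingEquiv (f := σ.toRingEquiv) fun c ↦ by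
        simpa [he] using σ.commutes (e.symm c)
      invFun := fun σ ↦ AlgEquiv.ofRingEquiv (f := σ.toRingEquiv) fun r ↦ by
        rw [he]
        exact σ.commutes (e r)
      left_inv := fun _ ↦ rfl
      right_inv := fun _ ↦ rfl
      map_mul' := fun _ _ ↦ rfl }
  exact ⟨Module.Finite.of_equiv_equiv e.symm (RingEquiv.refl F) hcomp,
    Algebra.IsSeparable.of_equiv_equiv e.symm (RingEquiv.refl F) hcomp,
    h.isIntegrallyClosedIn, ρ.trans β, fun σ ↦ hβ (ρ σ)⟩

theorem exists_intermediateField [Algebra k K] [Algebra k F] [IsScalarTower k K F]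
    [IsScalarTower k L F] (h : IsRegularSolution α K F) {Ω : Type*} [Field Ω] [IsAlgClosed Ω]
    [Algebra K Ω] [Algebra k Ω] [IsScalarTower k K Ω] :
    ∃ (ι : L →ₐ[k] Ω) (E : IntermediateField K Ω) (hE : Set.range ι ⊆ (E : Set Ω)),
      FiniteDimensional K E ∧ Algebra.IsSeparable K E ∧
      (∀ z : Ω, z ∈ E → IsAlgebraic k z → z ∈ Set.range ι) ∧
      ∃ β : Gal(E/K) ≃* G, ∀ (σ : Gal(E/K)) (x : L),
        ((σ ⟨ι x, hE (Set.mem_range_self x)⟩ : E) : Ω) = ι (α (β σ) x) := by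
  have := h.finiteDimensional
  have := h.isSeparable
  have := h.isIntegrallyClosedIn
  obtain ⟨β, hβ⟩ := h.exists_mulEquiv
  let j : F →ₐ[K] Ω := IsAlgClosed.lift
  let e : F ≃ₐ[K] j.fieldRange := AlgEquiv.ofInjectiveField j
  refine ⟨(j.restrictScalars k).comp (IsScalarTower.toAlgHom k L F), j.fieldRange, ?_,
    Module.Finite.equiv e.toLinearEquiv, AlgEquiv.Algebra.isSeparable e, ?_,
    (AlgEquiv.autCongr e.symm).trans β, fun σ x ↦ ?_⟩
  · rintro _ ⟨x, rfl⟩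
    exact ⟨algebraMap L F x, rfl⟩
  · rintro _ ⟨y, rfl⟩ hy
    have hy' : IsAlgebraic k y := (isAlgebraic_algHom_iff (j.restrictScalars k) j.injective).1 hy
    obtain ⟨x, rfl⟩ := IsIntegrallyClosedIn.algebraMap_eq_of_integral (R := L)
      hy'.isIntegral.tower_top
    exact ⟨x, rfl⟩
  · have hσ : e.symm (σ (e (algebraMap L F x))) = algebraMap L F (α (β _) x) :=
      hβ (AlgEquiv.autCongr e.symm σ) x
    rw [AlgEquiv.symm_apply_eq] at hσ
    exact congrArg Subtype.val hσ

end IsRegularSolution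

end RegularSolution

section ElementarySymmetric

theorem isSeparable_of_esymm_mem_range {K F ι : Type*} [Field K] [Field F] [Algebra K F]
    [Fintype ι] {x : ι → F} (hx : Function.Injective x)
    (h : ∀ n ≤ Fintype.card ι, (Finset.univ.val.map x).esymm n ∈ (algebraMap K F).range)
    (i : ι) : IsSeparable K (x i) := by
  have hlift : ∏ j, (X - C (x j)) ∈ lifts (algebraMap K F) := by
    have hvieta := Multiset.prod_X_sub_X_eq_sum_esymm (Finset.univ.val.map x)
    rw [Multiset.map_map, Multiset.card_map] at hvieta
    rw [Finset.prod, ← Function.comp_def (fun t ↦ X - C t), hvieta]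
    refine sum_mem fun n hn ↦ mul_mem (pow_mem ?_ n)
      (mul_mem ?_ (pow_mem (X_mem_lifts _) _))
    · exact (mem_lifts _).2 ⟨-1, by simp⟩
    · obtain ⟨c, hc⟩ := h n (Nat.lt_succ_iff.1 (Finset.mem_range.1 hn))
      exact hc ▸ C_mem_lifts _ c
  obtain ⟨q, hq⟩ := (mem_lifts _).1 hlift
  have hq_sep : q.Separable := by
    rw [← separable_map (algebraMap K F), hq]
    exact separable_prod_X_sub_C_iff.2 hx
  refine hq_sep.of_dvd (minpoly.dvd K _ ?_)
  rw [aeval_def, ← eval_map, hq, eval_prod]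
  exact Finset.prod_eq_zero (Finset.mem_univ i) (by simp)

theorem algebraicIndependent_esymm (σ R : Type*) [Fintype σ] [CommRing R] :
    AlgebraicIndependent R fun i : Fin (Fintype.card σ) ↦ MvPolynomial.esymm σ R (i + 1) := by
  intro p q hpq
  apply MvPolynomial.esymmAlgHom_injective (σ := σ) R le_rfl
  apply Subtype.ext
  simpa only [MvPolynomial.esymmAlgHom_apply] using hpq

theorem adjoin_range_algebraMap_X (σ L : Type*) [Field L] :
    adjoin L (Set.range fun i ↦
      algebraMap (MvPolynomial σ L) (FractionRing (MvPolynomial σ L)) (MvPolynomial.X i)) = ⊤ := by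
  refine eq_top_iff.2 fun y _ ↦ ?_
  set S := adjoin L (Set.range fun i ↦
      algebraMap (MvPolynomial σ L) (FractionRing (MvPolynomial σ L)) (MvPolynomial.X i))
  have hS (p : MvPolynomial σ L) : algebraMap _ (FractionRing (MvPolynomial σ L)) p ∈ S := by
    induction p using MvPolynomial.induction_on with
    | C a => exact S.algebraMap_mem a
    | add p q hp hq =>
      rw [map_add]
      exact add_mem hp hq
    | mul_X p i hp =>
      rw [map_mul]
      exact mul_mem hp (subset_adjoin _ _ (Set.mem_range_self i))
  obtain ⟨p, q, _, rfl⟩ := IsFractionRing.div_surjective (A := MvPolynomial σ L) y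
  exact div_mem (hS p) (hS q)

variable (k : Type*) {σ L : Type*} [Field k] [Field L] [Algebra k L] [Fintype σ]

variable (σ L) in
/-- The elementary symmetric functions of positive degree in the indeterminates indexed by `σ`, as
elements of the field of rational functions over `L`; the index `i` stands for degree `i + 1`. -/
noncomputable def fractionEsymm (i : Fin (Fintype.card σ)) : FractionRing (MvPolynomial σ L) :=
  algebraMap (MvPolynomial σ L) _ (MvPolynomial.esymm σ L (i + 1))

theorem algebraicIndependent_fractionEsymm : AlgebraicIndependent k (fractionEsymm σ L) :=
  ((algebraicIndependent_esymm σ L).map'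
    (f := IsScalarTower.toAlgHom L (MvPolynomial σ L) (FractionRing (MvPolynomial σ L)))
    (IsFractionRing.injective _ _)).restrictScalars (algebraMap k L).injective

theorem algebraMap_esymm_mem_adjoin {n : ℕ} (hn : n ≤ Fintype.card σ) :
    algebraMap _ (FractionRing (MvPolynomial σ L)) (MvPolynomial.esymm σ L n) ∈
      adjoin k (Set.range (fractionEsymm σ L)) := by
  rcases n with _ | n
  · rw [MvPolynomial.esymm_zero, map_one]
    exact one_mem _
  · exact subset_adjoin _ _ ⟨⟨n, hn⟩, rfl⟩

instance isSeparable_adjoin_fractionEsymm [Algebra.IsSeparable k L] :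
    Algebra.IsSeparable (adjoin k (Set.range (fractionEsymm σ L)))
      (FractionRing (MvPolynomial σ L)) := by
  refine isSeparable_of_adjoin_eq_top k _ L (adjoin_range_algebraMap_X σ L) ?_
  rintro _ ⟨i, rfl⟩
  refine isSeparable_of_esymm_mem_range
    ((IsFractionRing.injective _ _).comp MvPolynomial.X_injective) (fun n hn ↦ ?_) i
  have hesymm : algebraMap _ (FractionRing (MvPolynomial σ L)) (MvPolynomial.esymm σ L n) =
      (Finset.univ.val.map (algebraMap (MvPolynomial σ L) _ ∘ MvPolynomial.X)).esymm n := by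
    rw [← MvPolynomial.aeval_esymm_eq_multiset_esymm σ L, MvPolynomial.aeval_algebraMap_apply,
      MvPolynomial.aeval_X_left_apply]
  exact ⟨⟨_, algebraMap_esymm_mem_adjoin k hn⟩, hesymm⟩

end ElementarySymmetric

section TwistedPermutation

variable {k L G : Type*} [Field k] [Field L] [Algebra k L] [Group G] (α : G →* Gal(L/k))

/-- The action of `G` on polynomials over `L` in indeterminates indexed by `G` which translates the
indeterminates and acts on the coefficients through `α`. -/
noncomputable def twistedPermAut : G →* Gal(MvPolynomial G L/k) where
  toFun g := ((MvPolynomial.renameEquiv L (Equiv.mulLeft g)).restrictScalars k).trans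
    (MvPolynomial.mapAlgEquiv G (α g))
  map_one' := by
    ext p : 1
    simp only [map_one, Equiv.mulLeft_one]
    exact (MvPolynomial.map_id _).trans (MvPolynomial.rename_id_apply p)
  map_mul' g h := by
    ext p : 1
    induction p using MvPolynomial.induction_on with
    | C a => simp
    | add p q hp hq => rw [map_add, map_add, hp, hq]
    | mul_X p i hp =>
      rw [map_mul _ p, map_mul _ p, hp]
      simp [mul_assoc]

theorem twistedPermAut_apply (g : G) (p : MvPolynomial G L) :
    twistedPermAut α g p =
      MvPolynomial.map (α g : L →+* L) (MvPolynomial.rename (Equiv.mulLeft g) p) :=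
  rfl

theorem twistedPermAut_C (g : G) (a : L) :
    twistedPermAut α g (MvPolynomial.C a) = MvPolynomial.C (α g a) := by
  simp [twistedPermAut]

theorem twistedPermAut_X (g h : G) :
    twistedPermAut α g (MvPolynomial.X h) = MvPolynomial.X (g * h) := by
  simp [twistedPermAut]

theorem twistedPermAut_injective : Function.Injective (twistedPermAut α) := by
  intro g h hgh
  have hX := DFunLike.congr_fun hgh (MvPolynomial.X 1)
  rw [twistedPermAut_X, twistedPermAut_X, mul_one, mul_one] at hX
  exact MvPolynomial.X_injective hX

variable [Fintype G]

theorem twistedPermAut_esymm (g : G) (n : ℕ) :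
    twistedPermAut α g (MvPolynomial.esymm G L n) = MvPolynomial.esymm G L n := by
  rw [twistedPermAut_apply, MvPolynomial.rename_esymm, MvPolynomial.map_esymm]

theorem exists_injective_adjoin_fractionEsymm :
    ∃ φ : G →* Gal(FractionRing (MvPolynomial G L)/adjoin k (Set.range (fractionEsymm G L))),
      Function.Injective φ ∧ ∀ g x, φ g (algebraMap L _ x) = algebraMap L _ (α g x) := by
  let ψ : G →* Gal(FractionRing (MvPolynomial G L)/k) :=
    (IsFractionRing.fieldEquivOfAlgEquivHom k _).comp (twistedPermAut α)
  have hψ (g : G) (p : MvPolynomial G L) :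
      ψ g (algebraMap _ _ p) = algebraMap _ _ (twistedPermAut α g p) := by
    simp [ψ]
  have hfix (g : G) : ψ g ∈ (adjoin k (Set.range (fractionEsymm G L))).fixingSubgroup := by
    refine (IntermediateField.mem_fixingSubgroup_iff (adjoin k (Set.range (fractionEsymm G L))) _).2
      ((forall_mem_adjoin_smul_eq_self_iff k (ψ g)).2 ?_)
    rintro _ ⟨i, rfl⟩
    exact (hψ g _).trans (congrArg _ (twistedPermAut_esymm α g _))
  refine ⟨(fixingSubgroupEquiv _).toMonoidHom.comp (ψ.codRestrict _ hfix), ?_, fun g x ↦ ?_⟩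
  · refine (fixingSubgroupEquiv _).injective.comp fun g h hgh ↦ ?_
    exact twistedPermAut_injective α
      (IsFractionRing.fieldEquivOfAlgEquivHom_injective _ _ _ _ (congrArg Subtype.val hgh))
  · exact (hψ g (MvPolynomial.C x)).trans (by rw [twistedPermAut_C]; rfl)

end TwistedPermutation

section RationalFunctionField

variable {k E F : Type*} [Field k] [Field E] [Field F] [Algebra k E] [Algebra E F] [Algebra k F]
  [IsScalarTower k E F]

theorem restrictScalars_adjoin_adjoin (S : Set E) (T : Set F) :
    (adjoin (adjoin k S) T).restrictScalars k = adjoin k (algebraMap E F '' S ∪ T) := by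
  let i : E →ₐ[k] F := IsScalarTower.toAlgHom k E F
  rw [← adjoin_adjoin_left, restrictScalars_adjoin_of_algEquiv
    (((adjoin k S).equivMap i).trans (equivOfEq (adjoin_map k S i))) rfl]
  rfl

theorem nonempty_algEquiv_adjoin_adjoin_simple {n : ℕ} {t : Fin n → E}
    (ht : AlgebraicIndependent k t) {s : F} (hs : Transcendental E s) :
    Nonempty (FractionRing (MvPolynomial (Fin (1 + n)) k) ≃ₐ[k] (adjoin k (Set.range t))⟮s⟯) := by
  have hs_ind : AlgebraicIndependent E fun _ : Fin 1 ↦ s := by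
    rwa [algebraicIndependent_unique_type_iff]
  let x : Fin (1 + n) → F := Sum.elim (fun _ ↦ s) (algebraMap E F ∘ t) ∘ finSumFinEquiv.symm
  have hx : AlgebraicIndependent k x := (ht.sumElim_comp hs_ind).comp _ (Equiv.injective _)
  have hadjoin : adjoin k (Set.range x) = (adjoin k (Set.range t))⟮s⟯.restrictScalars k := by
    rw [restrictScalars_adjoin_adjoin, EquivLike.range_comp, Set.Sum.elim_range, Set.range_const,
      Set.range_comp, Set.union_comm]
  exact ⟨hx.aevalEquivField.trans (equivOfEq hadjoin)⟩

theorem exists_isRegularSolution_fractionRing {L G : Type*} [Field L] [Algebra k L] [Algebra L E]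
    [IsIntegrallyClosedIn L E] [Group G] {α : G →* Gal(L/k)} {n : ℕ} {t : Fin n → E}
    (ht : AlgebraicIndependent k t) [FiniteDimensional (adjoin k (Set.range t)) E]
    [Algebra.IsSeparable (adjoin k (Set.range t)) E] {φ : G →* Gal(E/adjoin k (Set.range t))}
    (hφ : Function.Injective φ)
    (hφL : ∀ g x, φ g (algebraMap L E x) = algebraMap L E (α g x)) :
    ∃ _ : Algebra (FractionRing (MvPolynomial (Fin (1 + n)) k)) (RatFunc E),
      IsScalarTower k (FractionRing (MvPolynomial (Fin (1 + n)) k)) (RatFunc E) ∧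
      IsRegularSolution α (FractionRing (MvPolynomial (Fin (1 + n)) k)) (RatFunc E) := by
  obtain ⟨s, hs, hsol⟩ := exists_isRegularSolution_ratFunc hφ
  obtain ⟨e⟩ := nonempty_algEquiv_adjoin_adjoin_simple ht hs
  let := ((algebraMap (adjoin k (Set.range t))⟮s⟯ (RatFunc E)).comp
    (RingHomClass.toRingHom e)).toAlgebra
  refine ⟨this, .of_algebraMap_eq fun c ↦ ?_,
    (hsol.of_tower hφL).congr_base e.toRingEquiv fun _ ↦ rfl⟩
  exact congrArg Subtype.val (e.commutes c).symm

end RationalFunctionField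

theorem statement_9_general (k : Type*) [Field k] (G : Type*) [Group G] [Finite G]
    (L : Type*) [Field L] [Algebra k L] [FiniteDimensional k L] [Algebra.IsSeparable k L]
    (α : G →* (L ≃ₐ[k] L)) :
    ∃ (n : ℕ), 0 < n ∧
      ∃ (ι : L →ₐ[k] AlgebraicClosure (FractionRing (MvPolynomial (Fin n) k)))
        (E : IntermediateField (FractionRing (MvPolynomial (Fin n) k))
          (AlgebraicClosure (FractionRing (MvPolynomial (Fin n) k))))
        (hE : Set.range ι ⊆ (E : Set (AlgebraicClosure (FractionRing (MvPolynomial (Fin n) k))))),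
        FiniteDimensional (FractionRing (MvPolynomial (Fin n) k)) E ∧
        Algebra.IsSeparable (FractionRing (MvPolynomial (Fin n) k)) E ∧
        (∀ z : AlgebraicClosure (FractionRing (MvPolynomial (Fin n) k)),
          z ∈ E → IsAlgebraic k z → z ∈ Set.range ι) ∧
        ∃ β : (E ≃ₐ[FractionRing (MvPolynomial (Fin n) k)] E) ≃* G,
          ∀ (σ : E ≃ₐ[FractionRing (MvPolynomial (Fin n) k)] E) (x : L),
            ((σ ⟨ι x, hE (Set.mem_range_self x)⟩ : E)
                : AlgebraicClosure (FractionRing (MvPolynomial (Fin n) k))) =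
              ι (α (β σ) x) := by
  have := Fintype.ofFinite G
  have := finiteDimensional_of_isFractionRing k (adjoin k (Set.range (fractionEsymm G L))) L
    (F := FractionRing (MvPolynomial G L)) (MvPolynomial G L)
  obtain ⟨φ, hφ, hφL⟩ := exists_injective_adjoin_fractionEsymm α
  obtain ⟨_, _, hsol⟩ :=
    exists_isRegularSolution_fractionRing (algebraicIndependent_fractionEsymm k (L := L)) hφ hφL
  exact ⟨1 + Fintype.card G, by omega, hsol.exists_intermediateField⟩

/-- **Embedding problems become regularly solvable after adjoining finitely many
indeterminates.**  Let `k` be a field and `α : G → Aut(L/k)` a finite embedding problem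
over `k` (`G` finite, `L/k` finite separable, `α` surjective).  Then there exist `n ≥ 1`,
an embedding `ι` of `L` into a fixed algebraic closure `Ω` of
`k(T₁,…,Tₙ) = FractionRing (MvPolynomial (Fin n) k)`, a finite separable extension
`E/k(T₁,…,Tₙ)` inside `Ω` containing `L(T₁,…,Tₙ)` (i.e. containing `ι '' L`), and an
isomorphism `β : Aut(E/k(T₁,…,Tₙ)) ≃ G` such that every `σ` maps (the copy of) `L` onto
itself with `σ|_L = α (β σ)`, and every element of `E` algebraic over `k` lies in (the
copy of) `L`, i.e. `E ∩ k̄ = L`. -/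
theorem statement_9 (k : Type) [Field k] (G : Type) [Group G] [Finite G]
    (L : Type) [Field L] [Algebra k L] [FiniteDimensional k L] [Algebra.IsSeparable k L]
    (α : G →* (L ≃ₐ[k] L)) (hα : Function.Surjective α) :
    ∃ (n : ℕ), 0 < n ∧
      ∃ (ι : L →ₐ[k] AlgebraicClosure (FractionRing (MvPolynomial (Fin n) k)))
        (E : IntermediateField (FractionRing (MvPolynomial (Fin n) k))
          (AlgebraicClosure (FractionRing (MvPolynomial (Fin n) k))))
        (hE : Set.range ι ⊆ (E : Set (AlgebraicClosure (FractionRing (MvPolynomial (Fin n) k))))),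
        FiniteDimensional (FractionRing (MvPolynomial (Fin n) k)) E ∧
        Algebra.IsSeparable (FractionRing (MvPolynomial (Fin n) k)) E ∧
        (∀ z : AlgebraicClosure (FractionRing (MvPolynomial (Fin n) k)),
          z ∈ E → IsAlgebraic k z → z ∈ Set.range ι) ∧
        ∃ β : (E ≃ₐ[FractionRing (MvPolynomial (Fin n) k)] E) ≃* G,
          ∀ (σ : E ≃ₐ[FractionRing (MvPolynomial (Fin n) k)] E) (x : L),
            ((σ ⟨ι x, hE (Set.mem_range_self x)⟩ : E)
                : AlgebraicClosure (FractionRing (MvPolynomial (Fin n) k))) =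
              ι (α (β σ) x) :=
  statement_9_general k G L α
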